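/- Let κ ∈ ℝ, let φ : ℝ → ℝ be continuously differentiable and non-increasing, let f(u) := φ(u) + κu, and for λ > 0 define f_λ(u) := φ_λ(u) + κu. Then every f_λ is differentiable on ℝ and for every u ∈ ℝ, lim_{λ → 0⁺} f_λ'(u) = f'(u). -/

import Mathlib

/-- The resolvent `J_λ = (I - λφ)⁻¹` of a (continuous, non-increasing) function
`φ : ℝ → ℝ`. -/
noncomputable def Jlam (φ : ℝ → ℝ) (lam : ℝ) : ℝ → ℝ :=
  Function.invFun (fun u : ℝ => u - lam * φ u)

/-- The Yosida approximation `φ_λ(u) = (J_λ(u) - u)/λ`. -/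
noncomputable def yosida (φ : ℝ → ℝ) (lam : ℝ) (u : ℝ) : ℝ :=
  (Jlam φ lam u - u) / lam

/-- `J_λ` is a right inverse. -/
theorem aux_right (φ : ℝ → ℝ) (hc : Continuous φ)
    (hmono : ∀ u₁ u₂ : ℝ, u₁ ≤ u₂ → φ u₂ ≤ φ u₁) (lam : ℝ) (hl : 0 < lam) (v : ℝ) :
    Jlam φ lam v - lam * φ (Jlam φ lam v) = v := by
  have hsurj : Function.Surjective (fun u : ℝ => u - lam * φ u) := by
    apply Continuous.surjective (by fun_prop)
    · apply Filter.tendsto_atTop_mono' _ _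
        (Filter.tendsto_atTop_add_const_right _ (- lam * φ 0) Filter.tendsto_id)
      filter_upwards [Filter.eventually_ge_atTop 0] with x hx
      have := mul_le_mul_of_nonneg_left (hmono 0 x hx) hl.le
      simp only [id]; linarith
    · apply Filter.tendsto_atBot_mono' _ _
        (Filter.tendsto_atBot_add_const_right _ (- lam * φ 0) Filter.tendsto_id)
      filter_upwards [Filter.eventually_le_atBot 0] with x hx
      have := mul_le_mul_of_nonneg_left (hmono x 0 hx) hl.le
      simp only [id]; linarith
  exact Function.invFun_eq (hsurj v)

theorem aux_expand (φ : ℝ → ℝ)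
    (hmono : ∀ u₁ u₂ : ℝ, u₁ ≤ u₂ → φ u₂ ≤ φ u₁) (lam : ℝ) (hl : 0 < lam) (a b : ℝ) :
    |a - b| ≤ |(a - lam * φ a) - (b - lam * φ b)| := by
  rcases le_total a b with h | h
  · have := mul_le_mul_of_nonneg_left (hmono a b h) hl.le
    rw [abs_of_nonpos (by linarith), abs_of_nonpos (by linarith)]; linarith
  · have := mul_le_mul_of_nonneg_left (hmono b a h) hl.le
    rw [abs_of_nonneg (by linarith), abs_of_nonneg (by linarith)]; linarith

theorem aux_deriv (φ : ℝ → ℝ) (hφ : ContDiff ℝ 1 φ)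
    (hmono : ∀ u₁ u₂ : ℝ, u₁ ≤ u₂ → φ u₂ ≤ φ u₁) (lam : ℝ) (hl : 0 < lam) (κ v : ℝ) :
    HasDerivAt (fun u : ℝ => yosida φ lam u + κ * u)
      (deriv φ (Jlam φ lam v) / (1 - lam * deriv φ (Jlam φ lam v)) + κ) v := by
  have hr := aux_right φ hφ.continuous hmono lam hl
  have hJc : Continuous (Jlam φ lam) := by
    apply LipschitzWith.continuous (K := 1)
    apply LipschitzWith.of_dist_le_mul
    intro x y
    have := aux_expand φ hmono lam hl (Jlam φ lam x) (Jlam φ lam y)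
    rw [hr, hr] at this
    simpa [Real.dist_eq] using this
  have hd : deriv φ (Jlam φ lam v) ≤ 0 :=
    Antitone.deriv_nonpos (fun a b h => hmono a b h)
  have hpos : 0 < 1 - lam * deriv φ (Jlam φ lam v) := by nlinarith
  have hφd := ((hφ.differentiable (by norm_num)) (Jlam φ lam v)).hasDerivAt
  have hg : HasDerivAt (fun u : ℝ => u - lam * φ u)
      (1 - lam * deriv φ (Jlam φ lam v)) (Jlam φ lam v) :=
    (hasDerivAt_id _).sub (hφd.const_mul lam)
  have hJ := HasDerivAt.of_local_left_inverse hJc.continuousAt hg hpos.ne'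
    (Filter.Eventually.of_forall hr)
  have h := ((hJ.sub (hasDerivAt_id v)).div_const lam).add ((hasDerivAt_id v).const_mul κ)
  refine h.congr_deriv ?_
  have := hpos.ne'
  field_simp
  ring

/-- For a continuously differentiable non-increasing `φ`, each
`f_λ(u) := φ_λ(u) + κ u` (`λ > 0`) is differentiable, and
`f_λ'(u) → f'(u)` as `λ → 0⁺`, where `f(u) = φ(u) + κ u`. -/
theorem fYosida_deriv_tendsto (κ : ℝ) (φ : ℝ → ℝ) (hφ : ContDiff ℝ 1 φ)
    (hmono : ∀ u₁ u₂ : ℝ, u₁ ≤ u₂ → φ u₂ ≤ φ u₁) :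
    (∀ lam : ℝ, 0 < lam →
      Differentiable ℝ (fun u : ℝ => yosida φ lam u + κ * u)) ∧
    (∀ u : ℝ, Filter.Tendsto
      (fun lam : ℝ => deriv (fun v : ℝ => yosida φ lam v + κ * v) u)
      (nhdsWithin 0 (Set.Ioi 0)) (nhds (deriv (fun v : ℝ => φ v + κ * v) u))) := by
  refine ⟨fun lam hl v => (aux_deriv φ hφ hmono lam hl κ v).differentiableAt, fun u => ?_⟩
  have hf : deriv (fun v : ℝ => φ v + κ * v) u = deriv φ u + κ := by
    have h := (((hφ.differentiable (by norm_num)) u).hasDerivAt).add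
      ((hasDerivAt_id u).const_mul κ)
    exact h.deriv.trans (by simp)
  rw [hf]
  have hlam : Filter.Tendsto (fun lam : ℝ => lam) (nhdsWithin 0 (Set.Ioi 0)) (nhds 0) :=
    Filter.tendsto_id.mono_left nhdsWithin_le_nhds
  have hJ : Filter.Tendsto (fun lam : ℝ => Jlam φ lam u) (nhdsWithin 0 (Set.Ioi 0))
      (nhds u) := by
    rw [tendsto_iff_dist_tendsto_zero]
    have hb : Filter.Tendsto (fun lam : ℝ => lam * |φ u|) (nhdsWithin 0 (Set.Ioi 0))
        (nhds 0) := by simpa using hlam.mul_const |φ u|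
    refine squeeze_zero' (Filter.Eventually.of_forall fun _ => dist_nonneg) ?_ hb
    filter_upwards [self_mem_nhdsWithin] with lam hl
    have hl' : 0 < lam := hl
    have := aux_expand φ hmono lam hl' (Jlam φ lam u) u
    rw [aux_right φ hφ.continuous hmono lam hl'] at this
    rw [Real.dist_eq]
    refine this.trans (le_of_eq ?_)
    rw [sub_sub_cancel, abs_mul, abs_of_pos hl']
  have hD : Filter.Tendsto (fun lam : ℝ => deriv φ (Jlam φ lam u))
      (nhdsWithin 0 (Set.Ioi 0)) (nhds (deriv φ u)) :=
    ((hφ.continuous_deriv le_rfl).tendsto u).comp hJ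
  have hmain := (hD.div ((hlam.mul hD).const_sub 1) (by simp)).add_const κ
  simp only [zero_mul, sub_zero, div_one] at hmain
  refine hmain.congr' ?_
  filter_upwards [self_mem_nhdsWithin] with lam hl
  exact (aux_deriv φ hφ hmono lam hl κ u).deriv.symm
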